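/- arXiv:2508.07066 — 2 statements merged into one kernel-verified Lean document; each statement's English description precedes it below -/
import Mathlib

section
/- Let n ≥ 1 and let S = (S_1, …, S_{n+1}) be an exchangeable random vector with values in ℝ^{n+1}. Then for every integer k with 0 ≤ k ≤ n+1, ℙ( |{i ∈ {1,…,n+1} : S_i ≤ S_{n+1}}| ≤ k ) ≤ k/(n+1). -/
open MeasureTheory ProbabilityTheory

/-!
Fix `k`. A vector `x` has at most `k` coordinates of maximal rank at most `k`: if `x j` is the
largest among them, then all of them are counted in the rank of `j`. Taking expectations, the
probabilities that the coordinates of `S` have rank at most `k` add up to at most `k`. These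
`n + 1` probabilities are equal, because the law of `S` is invariant under a group of permutations
that acts transitively on the indices.
-/

open scoped Finset

lemma lintegral_card_filter {Ω ι : Type*} [MeasurableSpace Ω] {μ : Measure Ω} (s : Finset ι)
    {p : ι → Ω → Prop} [∀ ω, DecidablePred (p · ω)]
    (hp : ∀ i ∈ s, NullMeasurableSet {ω | p i ω} μ) :
    ∫⁻ ω, (#{i ∈ s | p i ω} : ENNReal) ∂μ = ∑ i ∈ s, μ {ω | p i ω} := by
  calc ∫⁻ ω, (#{i ∈ s | p i ω} : ENNReal) ∂μ
    _ = ∫⁻ ω, ∑ i ∈ s, {ω | p i ω}.indicator 1 ω ∂μ := by simp [Set.indicator_apply]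
    _ = ∑ i ∈ s, ∫⁻ ω, {ω | p i ω}.indicator 1 ω ∂μ :=
      lintegral_finsetSum' s fun i hi ↦ aemeasurable_one.indicator₀ (hp i hi)
    _ = ∑ i ∈ s, μ {ω | p i ω} :=
      Finset.sum_congr rfl fun i hi ↦ lintegral_indicator_one₀ (hp i hi)

section MaxRank

variable {ι α : Type*} [Fintype ι]

/-- The maximal rank of the coordinate `x j` among the coordinates of `x`: ranks start at `1`, and
tied coordinates all receive the largest rank available to them. -/
def maxRank [LE α] [DecidableLE α] (x : ι → α) (j : ι) : ℕ :=
  #{i | x i ≤ x j}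

lemma maxRank_comp_equiv {κ : Type*} [Fintype κ] [LE α] [DecidableLE α]
    (x : ι → α) (e : κ ≃ ι) (j : κ) : maxRank (x ∘ e) j = maxRank x (e j) :=
  Finset.card_equiv e (by simp)

lemma card_filter_maxRank_le_le [LinearOrder α] (x : ι → α) (k : ℕ) :
    #{j | maxRank x j ≤ k} ≤ k := by
  obtain hempty | hne := Finset.eq_empty_or_nonempty {j | maxRank x j ≤ k}
  · simp [hempty]
  · obtain ⟨j, hj, hmax⟩ := Finset.exists_max_image _ x hne
    calc #{j | maxRank x j ≤ k}
      _ ≤ maxRank x j := Finset.card_le_card fun i hi ↦ by simpa using hmax i hi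
      _ ≤ k := by simpa using hj

variable [TopologicalSpace α] [SecondCountableTopology α] [MeasurableSpace α]
  [OpensMeasurableSpace α]

lemma measurable_maxRank [PartialOrder α] [DecidableLE α] [OrderClosedTopology α] (j : ι) :
    Measurable fun x : ι → α ↦ maxRank x j := by
  simp only [maxRank, Finset.card_filter]
  exact Finset.measurable_sum _ fun i _ ↦ Measurable.ite
    (measurableSet_le (measurable_pi_apply i) (measurable_pi_apply j))
    measurable_const measurable_const

variable {Ω : Type*} [MeasurableSpace Ω] {P : Measure Ω} {S : Ω → ι → α}

lemma sum_measure_maxRank_le_le [LinearOrder α] [OrderClosedTopology α]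
    (hS : AEMeasurable S P) (k : ℕ) :
    ∑ j, P {ω | maxRank (S ω) j ≤ k} ≤ k * P Set.univ := by
  have hmeas (j : ι) : NullMeasurableSet {ω | maxRank (S ω) j ≤ k} P :=
    ((measurable_maxRank j).comp_aemeasurable hS).nullMeasurable measurableSet_Iic
  calc ∑ j, P {ω | maxRank (S ω) j ≤ k}
    _ = ∫⁻ ω, (#{j | maxRank (S ω) j ≤ k} : ENNReal) ∂P :=
      (lintegral_card_filter _ fun j _ ↦ hmeas j).symm
    _ ≤ ∫⁻ _, (k : ENNReal) ∂P :=
      lintegral_mono fun ω ↦ Nat.cast_le.2 (card_filter_maxRank_le_le (S ω) k)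
    _ = k * P Set.univ := lintegral_const _

lemma measure_maxRank_perm_apply_le [PartialOrder α] [DecidableLE α] [OrderClosedTopology α]
    (σ : Equiv.Perm ι) (hσ : IdentDistrib (fun ω ↦ S ω ∘ σ) S P P) (j : ι) (k : ℕ) :
    P {ω | maxRank (S ω) (σ j) ≤ k} = P {ω | maxRank (S ω) j ≤ k} := by
  simp only [← maxRank_comp_equiv]
  exact hσ.measure_mem_eq (measurable_maxRank j measurableSet_Iic)

theorem rank_subuniform_of_exchangeable_general [LinearOrder α] [OrderClosedTopology α]
    {G : Type*} [Group G] [MulAction G ι] [MulAction.IsPretransitive G ι]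
    (hS : ∀ g : G, IdentDistrib (fun ω i ↦ S ω (g • i)) S P P) (j : ι) (k : ℕ) :
    P {ω | maxRank (S ω) j ≤ k} ≤ k * P Set.univ / Fintype.card ι := by
  have hconst (i : ι) : P {ω | maxRank (S ω) i ≤ k} = P {ω | maxRank (S ω) j ≤ k} := by
    obtain ⟨g, rfl⟩ := MulAction.exists_smul_eq G j i
    exact measure_maxRank_perm_apply_le (MulAction.toPerm g) (hS g) j k
  have hcard : (Fintype.card ι : ENNReal) ≠ 0 := by
    exact_mod_cast (Fintype.card_pos_iff.2 ⟨j⟩).ne'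
  rw [ENNReal.le_div_iff_mul_le (.inl hcard) (.inl (ENNReal.natCast_ne_top _))]
  calc P {ω | maxRank (S ω) j ≤ k} * Fintype.card ι
    _ = ∑ i, P {ω | maxRank (S ω) i ≤ k} := by simp [hconst, mul_comm]
    _ ≤ k * P Set.univ := sum_measure_maxRank_le_le (hS 1).aemeasurable_snd k

end MaxRank

/-- Sub-uniformity of the rank of the last coordinate of an exchangeable random vector:
if `S = (S_1, …, S_{n+1})` is exchangeable in `ℝ^{n+1}`, then for every `0 ≤ k ≤ n+1`,
`P(|{i : S_i ≤ S_{n+1}}| ≤ k) ≤ k/(n+1)`. -/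
theorem rank_subuniform_of_exchangeable
    {Ω : Type*} [MeasurableSpace Ω] (P : Measure Ω) [IsProbabilityMeasure P]
    (n : ℕ) (hn : 1 ≤ n) (S : Ω → Fin (n + 1) → ℝ) (hS : Measurable S)
    (hexch : ∀ σ : Equiv.Perm (Fin (n + 1)),
      Measure.map (fun ω i => S ω (σ i)) P = Measure.map S P)
    (k : ℕ) (hk : k ≤ n + 1) :
    P {ω | (Finset.univ.filter (fun i : Fin (n + 1) => S ω i ≤ S ω (Fin.last n))).card ≤ k}
      ≤ (k : ENNReal) / (n + 1) := by
  have hident (σ : Equiv.Perm (Fin (n + 1))) : IdentDistrib (fun ω i ↦ S ω (σ • i)) S P P :=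
    ⟨by fun_prop, hS.aemeasurable, hexch σ⟩
  simpa [maxRank] using rank_subuniform_of_exchangeable_general hident (Fin.last n) k
end

section
/- Let T ≥ 1, let p = (p_1, …, p_T) ∈ [0,1]^T, let α ∈ (0,1), and let R(p) denote the Benjamini–Hochberg rejection set at level α applied to p. Fix t ∈ {1,…,T} and let p' be the vector obtained from p by replacing p_t with 0. If t ∈ R(p), then |R(p')| = |R(p)|. -/
/-- The number `k*` of Benjamini–Hochberg rejections at level `α`: the largest (1-based) rank `m`
such that the `m`-th order statistic `p^(m)` of the p-values satisfies `p^(m) ≤ α·m/T`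
(and `0` if no such rank exists). Here `p (Tuple.sort p m)` is the order statistic of rank
`m.val + 1`. -/
noncomputable def bhNumReject {T : ℕ} (p : Fin T → ℝ) (α : ℝ) : ℕ :=
  if h : (Finset.univ.filter
      (fun m : Fin T => p (Tuple.sort p m) ≤ α * (m.val + 1) / T)).Nonempty then
    ((Finset.univ.filter
      (fun m : Fin T => p (Tuple.sort p m) ≤ α * (m.val + 1) / T)).max' h).val + 1
  else 0

/-- The Benjamini–Hochberg rejection set at level `α`: `R = {t : p_t ≤ α·k*/T}`, with `R = ∅`
when `k* = 0`. -/
noncomputable def bhReject {T : ℕ} (p : Fin T → ℝ) (α : ℝ) : Finset (Fin T) :=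
  if bhNumReject p α = 0 then ∅
  else Finset.univ.filter (fun t => p t ≤ α * (bhNumReject p α) / T)

/-!
The number `k*` of rejections is the largest `m` for which at least `m` of the p-values are
at most `α * m / T`. Moving a rejected p-value within the region below `α * k* / T`
preserves all these counts for `m ≥ k*`, so `k*` still qualifies and no larger `m` starts to.
-/

section

open Finset

theorem apply_sort_le_iff_lt_card {n : ℕ} {β : Type*} [LinearOrder β] (f : Fin n → β)
    (m : Fin n) (c : β) : f (Tuple.sort f m) ≤ c ↔ m < #{i | f i ≤ c} := by
  have card_sorted : #{i | (f ∘ Tuple.sort f) i ≤ c} = #{i | f i ≤ c} :=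
    card_equiv (Tuple.sort f) (by simp)
  rw [← card_sorted, Tuple.lt_card_le_iff_apply_le_of_monotone (Tuple.monotone_sort f),
    Function.comp_apply]

variable {T : ℕ} {p q : Fin T → ℝ} {α : ℝ}

theorem isGreatest_bhNumReject (p : Fin T → ℝ) (α : ℝ) :
    IsGreatest {m : ℕ | m ≤ #{i | p i ≤ α * m / T}} (bhNumReject p α) := by
  have rank_iff (m : Fin T) : p (Tuple.sort p m) ≤ α * (m.val + 1) / T ↔
      m.val + 1 ≤ #{i | p i ≤ α * (m.val + 1 : ℕ) / T} := by
    rw [apply_sort_le_iff_lt_card, Nat.lt_iff_add_one_le, Nat.cast_succ]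
  constructor
  · rw [bhNumReject]
    split_ifs with h
    · exact (rank_iff _).1 (mem_filter.1 (max'_mem _ h)).2
    · exact Nat.zero_le _
  · rintro (_ | m) hm
    · exact Nat.zero_le _
    · have m_lt : m < T := hm.trans (card_finset_fin_le _)
      have m_mem : (⟨m, m_lt⟩ : Fin T) ∈
          ({m | p (Tuple.sort p m) ≤ α * (m.val + 1) / T} : Finset (Fin T)) :=
        mem_filter.2 ⟨mem_univ _, (rank_iff ⟨m, m_lt⟩).2 hm⟩
      rw [bhNumReject, dif_pos ⟨_, m_mem⟩]
      exact Nat.succ_le_succ (le_max' _ _ m_mem)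

theorem mem_bhReject {i : Fin T} :
    i ∈ bhReject p α ↔ bhNumReject p α ≠ 0 ∧ p i ≤ α * bhNumReject p α / T := by
  rw [bhReject]
  split_ifs with h <;> simp [h]

theorem bhNumReject_le_bhNumReject
    (h : ∀ i ∈ bhReject p α, q i ≤ α * bhNumReject p α / T) :
    bhNumReject p α ≤ bhNumReject q α := by
  obtain hk | hk := eq_or_ne (bhNumReject p α) 0
  · exact hk ▸ Nat.zero_le _
  · apply (isGreatest_bhNumReject q α).2
    calc bhNumReject p α
        ≤ #{i | p i ≤ α * bhNumReject p α / T} := (isGreatest_bhNumReject p α).1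
      _ ≤ #{i | q i ≤ α * bhNumReject p α / T} :=
        card_le_card (monotone_filter_right _ fun i _ hi ↦ h i (mem_bhReject.2 ⟨hk, hi⟩))

theorem bhNumReject_eq_of_le_threshold (hα : 0 ≤ α)
    (h_mem : ∀ i ∈ bhReject p α, q i ≤ α * bhNumReject p α / T)
    (h_notMem : ∀ i ∉ bhReject p α, p i ≤ q i) :
    bhNumReject q α = bhNumReject p α := by
  have bhNumReject_le : bhNumReject p α ≤ bhNumReject q α := bhNumReject_le_bhNumReject h_mem
  refine bhNumReject_le.antisymm' (bhNumReject_le_bhNumReject fun i hiq ↦ ?_)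
  by_cases hip : i ∈ bhReject p α
  · calc p i ≤ α * bhNumReject p α / T := (mem_bhReject.1 hip).2
      _ ≤ α * bhNumReject q α / T := by gcongr
  · exact (h_notMem i hip).trans (mem_bhReject.1 hiq).2

theorem bhReject_eq_of_le_threshold (hα : 0 ≤ α)
    (h_mem : ∀ i ∈ bhReject p α, q i ≤ α * bhNumReject p α / T)
    (h_notMem : ∀ i ∉ bhReject p α, p i ≤ q i) :
    bhReject q α = bhReject p α := by
  ext i
  rw [mem_bhReject, bhNumReject_eq_of_le_threshold hα h_mem h_notMem]
  constructor
  · rintro ⟨hk, hqi⟩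
    by_contra hip
    exact hip (mem_bhReject.2 ⟨hk, (h_notMem i hip).trans hqi⟩)
  · exact fun hip ↦ ⟨(mem_bhReject.1 hip).1, h_mem i hip⟩

theorem bhReject_card_update_zero_general (hα : 0 ≤ α) {t : Fin T} (ht : t ∈ bhReject p α)
    {x : ℝ} (hx : x ≤ α * bhNumReject p α / T) :
    bhReject (Function.update p t x) α = bhReject p α := by
  apply bhReject_eq_of_le_threshold hα
  · intro i hi
    obtain rfl | hit := eq_or_ne i t
    · rwa [Function.update_self]
    · rw [Function.update_of_ne hit]
      exact (mem_bhReject.1 hi).2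
  · intro i hi
    rw [Function.update_of_ne (ne_of_mem_of_not_mem ht hi).symm]

end

/-- Leave-one-out invariance of the Benjamini–Hochberg procedure: if index `t` is rejected by
BH at level `α` applied to `p`, then replacing `p_t` by `0` does not change the number of
rejections. -/
theorem bhReject_card_update_zero
    (T : ℕ) (hT : 1 ≤ T) (p : Fin T → ℝ) (hrange : ∀ t, p t ∈ Set.Icc (0 : ℝ) 1)
    (α : ℝ) (hα : α ∈ Set.Ioo (0 : ℝ) 1) (t : Fin T) (ht : t ∈ bhReject p α) :
    (bhReject (Function.update p t 0) α).card = (bhReject p α).card := by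
  have threshold_nonneg : 0 ≤ α * bhNumReject p α / T := by have := hα.1; positivity
  rw [bhReject_card_update_zero_general hα.1.le ht threshold_nonneg]
end
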